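/- Let α be a type and let A, B be lists over α, both of length 2. Let i ≥ 2 and m ≥ 1 be integers and set k = 2^i·m − 2^{i−1} + 1 (an odd integer; this corresponds to the chain k_1 = k, k_{j} = (k_{j−1}+1)/2 ending at the first even value k_i = 2m, with k_{i+1} = m). Then |S_{A,B}(m)| = 2 · d(k−1), where d is Stern's diatomic sequence. -/

import Mathlib

/-- Stern's diatomic sequence. -/
def stern : ℕ → ℕ
  | 0 => 0
  | 1 => 1
  | n + 2 =>
    if (n + 2) % 2 = 0 then stern ((n + 2) / 2)
    else stern ((n + 2) / 2) + stern ((n + 2) / 2 + 1)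
decreasing_by all_goals omega

/-- OEIS A003602: a(1)=1, a(2n)=a(n), a(2n+1)=n+1. (a(0)=0 as junk value.) -/
def aseq : ℕ → ℕ
  | 0 => 0
  | 1 => 1
  | n + 2 =>
    if (n + 2) % 2 = 0 then aseq ((n + 2) / 2)
    else (n + 2) / 2 + 1
decreasing_by all_goals omega

-- the modified sequence `a*`: zero at powers of two.
open Classical in
noncomputable def aStar (j : ℕ) : ℕ :=
  if ∃ k, j = 2 ^ k then 0 else aseq j

theorem aseq_le (n : ℕ) : aseq n ≤ n := by
  induction n using Nat.strong_induction_on with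
  | _ n ih =>
    match n with
    | 0 => simp [aseq]
    | 1 => simp [aseq]
    | m + 2 =>
      rw [aseq]
      split
      · exact le_trans (ih ((m + 2) / 2) (by omega)) (by omega)
      · omega

theorem aStar_le (j : ℕ) : aStar j ≤ j := by
  unfold aStar
  split
  · omega
  · exact aseq_le j

/-- The Markov-type sequence `S_{A,B}(n)`. -/
noncomputable def mseq {α : Type*} (A B : List α) : ℕ → List α
  | 0 => A
  | 1 => B
  | 2 => A ++ B
  | n + 3 =>
    if (n + 3) % 2 = 0 then
      mseq A B ((n + 3) / 2) ++ mseq A B (aseq ((n + 3) / 2))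
    else
      mseq A B (aStar ((n + 4) / 2 - 1)) ++ mseq A B ((n + 4) / 2)
decreasing_by
  all_goals first
    | omega
    | exact lt_of_le_of_lt (aseq_le _) (by omega)
    | exact lt_of_le_of_lt (aStar_le _) (by omega)

/-!
If `A` and `B` have common length `c`, then `|S(m)| = c * d(2m - 1)` for all `m ≥ 1`. Indeed,
`2 a(j) - 1` is the odd part of `j` and `d` does not see powers of two, so by induction
`|S(a(j))| = c * d(j)`; replacing `a` by `a*` changes no length, as it puts `A`, of length `c`,
where `d(j) = 1`. The recurrences of `S` thus become `d(4j - 1) = d(2j - 1) + d(2j)` and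
`d(4j + 1) = d(2j) + d(2j + 1)`. Finally, `k - 1 = 2^(i-1) (2m - 1)`.
-/

theorem stern_two_mul (n : ℕ) : stern (2 * n) = stern n := by
  rcases n with _ | n
  · rfl
  · rw [mul_add_one, stern, if_pos (by omega), show (2 * n + 2) / 2 = n + 1 by omega]

theorem stern_two_mul_add_one (n : ℕ) : stern (2 * n + 1) = stern n + stern (n + 1) := by
  rcases n with _ | n
  · simp [stern]
  · rw [show 2 * (n + 1) + 1 = 2 * n + 1 + 2 by ring, stern, if_neg (by omega),
      show (2 * n + 1 + 2) / 2 = n + 1 by omega]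

theorem stern_two_pow_mul (k n : ℕ) : stern (2 ^ k * n) = stern n := by
  induction k with
  | zero => rw [pow_zero, one_mul]
  | succ k ih => rw [pow_succ', mul_assoc, stern_two_mul, ih]

theorem stern_two_pow (k : ℕ) : stern (2 ^ k) = 1 := by
  simpa [stern] using stern_two_pow_mul k 1

theorem aseq_two_mul (n : ℕ) : aseq (2 * n) = aseq n := by
  rcases n with _ | n
  · rfl
  · rw [mul_add_one, aseq, if_pos (by omega), show (2 * n + 2) / 2 = n + 1 by omega]

theorem aseq_two_mul_add_one (n : ℕ) : aseq (2 * n + 1) = n + 1 := by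
  rcases n with _ | n
  · simp [aseq]
  · rw [show 2 * (n + 1) + 1 = 2 * n + 1 + 2 by ring, aseq, if_neg (by omega)]
    omega

theorem aseq_two_pow_mul (k n : ℕ) : aseq (2 ^ k * n) = aseq n := by
  induction k with
  | zero => rw [pow_zero, one_mul]
  | succ k ih => rw [pow_succ', mul_assoc, aseq_two_mul, ih]

theorem exists_eq_two_pow_mul_two_mul_aseq_sub_one {n : ℕ} (hn : n ≠ 0) :
    ∃ k, n = 2 ^ k * (2 * aseq n - 1) := by
  obtain ⟨k, _, ⟨j, rfl⟩, rfl⟩ := Nat.exists_eq_two_pow_mul_odd hn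
  refine ⟨k, ?_⟩
  rw [aseq_two_pow_mul, aseq_two_mul_add_one, show 2 * (j + 1) - 1 = 2 * j + 1 by omega]

theorem aseq_ne_zero {n : ℕ} (hn : n ≠ 0) : aseq n ≠ 0 := by
  obtain ⟨k, hk⟩ := exists_eq_two_pow_mul_two_mul_aseq_sub_one hn
  intro h
  exact hn (by simpa [h] using hk)

theorem stern_two_mul_aseq_sub_one {n : ℕ} (hn : n ≠ 0) :
    stern (2 * aseq n - 1) = stern n := by
  obtain ⟨k, hk⟩ := exists_eq_two_pow_mul_two_mul_aseq_sub_one hn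
  conv_rhs => rw [hk, stern_two_pow_mul]

section MarkovSequence

variable {α : Type*} (A B : List α)

theorem mseq_two_mul {j : ℕ} (hj : 2 ≤ j) :
    mseq A B (2 * j) = mseq A B j ++ mseq A B (aseq j) := by
  obtain ⟨n, rfl⟩ := Nat.exists_eq_add_of_le' hj
  rw [show 2 * (n + 2) = 2 * n + 1 + 3 by ring, mseq, if_pos (by omega),
    show (2 * n + 1 + 3) / 2 = n + 2 by omega]

theorem mseq_two_mul_add_one {j : ℕ} (hj : j ≠ 0) :
    mseq A B (2 * j + 1) = mseq A B (aStar j) ++ mseq A B (j + 1) := by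
  obtain ⟨n, rfl⟩ := Nat.exists_eq_succ_of_ne_zero hj
  rw [show 2 * n.succ + 1 = 2 * n + 3 by omega, mseq, if_neg (by omega),
    show (2 * n + 4) / 2 = n.succ + 1 by omega, Nat.add_sub_cancel]

variable {A B}

theorem length_mseq_aStar {j : ℕ}
    (h : (mseq A B (aseq j)).length = A.length * stern j) :
    (mseq A B (aStar j)).length = A.length * stern j := by
  unfold aStar
  split_ifs with hpow
  · obtain ⟨k, rfl⟩ := hpow
    rw [mseq, stern_two_pow, mul_one]
  · exact h

theorem length_mseq (hAB : A.length = B.length) {m : ℕ} (hm : m ≠ 0) :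
    (mseq A B m).length = A.length * stern (2 * m - 1) := by
  induction m using Nat.strong_induction_on with
  | _ m ih =>
    have length_aseq {j : ℕ} (hj : j ≠ 0) (hjm : j < m) :
        (mseq A B (aseq j)).length = A.length * stern j := by
      rw [ih _ ((aseq_le j).trans_lt hjm) (aseq_ne_zero hj), stern_two_mul_aseq_sub_one hj]
    obtain ⟨j, rfl | rfl⟩ := Nat.even_or_odd' m
    · obtain rfl | hj : j = 1 ∨ 2 ≤ j := by omega
      · simp [mseq, stern, ← hAB, mul_two]
      · calc (mseq A B (2 * j)).length
            = A.length * (stern (2 * j - 1) + stern j) := by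
              rw [mseq_two_mul A B hj, List.length_append, ih j (by omega) (by omega),
                length_aseq (by omega) (by omega), mul_add]
          _ = A.length * stern (2 * (2 * j) - 1) := by
              rw [show 2 * (2 * j) - 1 = 2 * (2 * j - 1) + 1 by omega, stern_two_mul_add_one,
                Nat.sub_add_cancel (by omega), stern_two_mul]
    · obtain rfl | hj := eq_or_ne j 0
      · simp [mseq, stern, hAB]
      · calc (mseq A B (2 * j + 1)).length
            = A.length * (stern j + stern (2 * j + 1)) := by
              rw [mseq_two_mul_add_one A B hj, List.length_append,
                length_mseq_aStar (length_aseq hj (by omega)), ih (j + 1) (by omega) (by omega),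
                show 2 * (j + 1) - 1 = 2 * j + 1 by omega, mul_add]
          _ = A.length * stern (2 * (2 * j + 1) - 1) := by
              rw [show 2 * (2 * j + 1) - 1 = 2 * (2 * j) + 1 by omega,
                stern_two_mul_add_one (2 * j), stern_two_mul]

end MarkovSequence

theorem stmt8_general {α : Type*} {A B : List α} (hAB : A.length = B.length)
    {i m : ℕ} (hi : i ≠ 0) (hm : m ≠ 0) :
    (mseq A B m).length = A.length * stern ((2 ^ i * m - 2 ^ (i - 1) + 1) - 1) := by
  obtain ⟨i, rfl⟩ := Nat.exists_eq_add_one_of_ne_zero hi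
  have index_eq : 2 ^ (i + 1) * m - 2 ^ i = 2 ^ i * (2 * m - 1) := by
    rw [Nat.mul_sub_one, pow_succ, mul_assoc]
  rw [length_mseq hAB hm, Nat.add_sub_cancel, Nat.add_sub_cancel, index_eq, stern_two_pow_mul]

/-- for `A`, `B` of length 2, `i ≥ 2`, `m ≥ 1` and
`k = 2^i·m − 2^{i−1} + 1`, one has `|S_{A,B}(m)| = 2·d(k−1)`. -/
theorem stmt8 {α : Type*} (A B : List α) (hA : A.length = 2) (hB : B.length = 2)
    (i m : ℕ) (hi : 2 ≤ i) (hm : 1 ≤ m) :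
    (mseq A B m).length = 2 * stern ((2 ^ i * m - 2 ^ (i - 1) + 1) - 1) := by
  rw [stmt8_general (hA.trans hB.symm) (by omega : i ≠ 0) (by omega : m ≠ 0), hA]
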